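/- Let 0 < r* < A and define E1(x) = ∫_x^∞ e^{−z}/z dz for x > 0 and f_0(R) = (1 − e^{1/r*}·E1(1/r*))·(R − A) + ∫_{1/A}^{1/R} E1(x)·(e^x/x) dx for R ∈ (0, A]. Then f_0 is twice continuously differentiable on (0, A), satisfies f_0′(R) + R²·f_0″(R) = e^{1/R}·E1(1/R) − e^{1/r*}·E1(1/r*) for every R ∈ (0, A), satisfies the boundary condition f_0(A) = 0, and is bounded on (0, A]. -/

import Mathlib

open MeasureTheory Real Set

/-- The exponential integral `E1 x = ∫_x^∞ e^{-z}/z dz`. -/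
noncomputable def E1 (x : ℝ) : ℝ := ∫ z in Set.Ioi x, Real.exp (-z) / z

lemma E1_int (a : ℝ) (ha : 0 < a) : IntegrableOn (fun z : ℝ => Real.exp (-z) / z) (Set.Ioi a) := by
  have h1 : IntegrableOn (fun z : ℝ => Real.exp (-z) / a) (Set.Ioi a) :=
    (integrableOn_exp_neg_Ioi a).div_const a
  refine Integrable.mono' h1 ?_ ?_
  · exact (by fun_prop : Measurable (fun z : ℝ => Real.exp (-z) / z)).aestronglyMeasurable
  · filter_upwards [ae_restrict_mem measurableSet_Ioi] with z hz
    have hz' : a < z := hz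
    have : 0 < z := ha.trans hz'
    rw [Real.norm_of_nonneg (by positivity)]
    gcongr

lemma E1_nonneg (a : ℝ) (ha : 0 < a) : 0 ≤ E1 a := by
  refine setIntegral_nonneg measurableSet_Ioi fun z hz => ?_
  have : 0 < z := ha.trans hz
  positivity

lemma E1_le (a : ℝ) (ha : 0 < a) : E1 a ≤ Real.exp (-a) / a := by
  have h1 : IntegrableOn (fun z : ℝ => Real.exp (-z) / a) (Set.Ioi a) :=
    (integrableOn_exp_neg_Ioi a).div_const a
  calc E1 a ≤ ∫ z in Set.Ioi a, Real.exp (-z) / a := by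
        refine setIntegral_mono_on (E1_int a ha) h1 measurableSet_Ioi fun z hz => ?_
        have hz' : a < z := hz
        gcongr
    _ = _ := by rw [integral_div, integral_exp_neg_Ioi]

lemma E1_deriv (x : ℝ) (hx : 0 < x) : HasDerivAt E1 (-(Real.exp (-x) / x)) x := by
  have hc : ContinuousOn (fun z : ℝ => Real.exp (-z) / z) (Set.Ioi 0) := by
    refine ContinuousOn.div (by fun_prop) (by fun_prop) fun z hz => ne_of_gt hz
  have hsub : ∀ y : ℝ, 0 < y → Set.uIcc x y ⊆ Set.Ioi 0 := fun y hy z hz =>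
    lt_of_lt_of_le (lt_min hx hy) hz.1
  have h1 : HasDerivAt (fun y => ∫ z in x..y, Real.exp (-z) / z) (Real.exp (-x) / x) x := by
    refine intervalIntegral.integral_hasDerivAt_right (by simp) ?_ ?_
    · exact hc.stronglyMeasurableAtFilter isOpen_Ioi x hx
    · exact hc.continuousAt (isOpen_Ioi.mem_nhds hx)
  have h2 : HasDerivAt (fun y => E1 x - ∫ z in x..y, Real.exp (-z) / z)
      (-(Real.exp (-x) / x)) x := h1.const_sub (E1 x)
  refine h2.congr_of_eventuallyEq ?_
  filter_upwards [isOpen_Ioi.mem_nhds hx] with y hy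
  have hy : 0 < y := hy
  have := intervalIntegral.integral_interval_add_Ioi (E1_int x hx) (E1_int y hy)
  simp only [E1]
  linarith

lemma G_contOn : ContinuousOn (fun x => E1 x * (Real.exp x / x)) (Set.Ioi 0) := by
  refine ContinuousOn.mul (fun x hx => (E1_deriv x hx).continuousAt.continuousWithinAt) ?_
  exact ContinuousOn.div (by fun_prop) (by fun_prop) fun z hz => ne_of_gt hz

lemma H_deriv (R : ℝ) (hR : 0 < R) : HasDerivAt (fun R => Real.exp (1 / R) * E1 (1 / R))
    (-(Real.exp (1 / R) * E1 (1 / R)) / R ^ 2 + 1 / R) R := by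
  have hi : HasDerivAt (fun R : ℝ => 1 / R) (-(1 / R ^ 2)) R := by
    simpa [one_div] using hasDerivAt_inv hR.ne'
  have h1 := (hi.exp).mul ((E1_deriv (1 / R) (by positivity)).comp R hi)
  refine h1.congr_deriv ?_
  rw [Real.exp_neg]
  have := Real.exp_ne_zero (1 / R)
  simp only [Function.comp]
  field_simp
  try ring

lemma f_deriv (c A : ℝ) (hA : 0 < A) (R : ℝ) (hR : 0 < R) :
    HasDerivAt (fun R => c * (R - A) + ∫ x in (1 / A)..(1 / R), E1 x * (Real.exp x / x))
      (c - Real.exp (1 / R) * E1 (1 / R) / R) R := by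
  have hi : HasDerivAt (fun R : ℝ => 1 / R) (-(1 / R ^ 2)) R := by
    simpa [one_div] using hasDerivAt_inv hR.ne'
  have hA' : 0 < 1 / A := by positivity
  have hR' : 0 < 1 / R := by positivity
  have h1 : HasDerivAt (fun y => ∫ x in (1 / A)..y, E1 x * (Real.exp x / x))
      (E1 (1 / R) * (Real.exp (1 / R) / (1 / R))) (1 / R) := by
    refine intervalIntegral.integral_hasDerivAt_right ?_ ?_ ?_
    · exact (G_contOn.mono fun z hz => lt_of_lt_of_le (lt_min hA' hR') hz.1).intervalIntegrable
    · exact G_contOn.stronglyMeasurableAtFilter isOpen_Ioi _ hR'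
    · exact G_contOn.continuousAt (isOpen_Ioi.mem_nhds hR')
  have h2 := (((hasDerivAt_id R).sub_const A).const_mul c).add (h1.comp R hi)
  refine h2.congr_deriv ?_
  field_simp
  try ring

lemma f_bound (c A : ℝ) (hA : 0 < A) (R : ℝ) (hR : 0 < R) (hRA : R ≤ A) :
    |c * (R - A) + ∫ x in (1 / A)..(1 / R), E1 x * (Real.exp x / x)| ≤ |c| * A + A := by
  have hA' : 0 < 1 / A := by positivity
  have hle : 1 / A ≤ 1 / R := one_div_le_one_div_of_le hR hRA
  have hd : ∀ x ∈ Set.uIcc (1 / A) (1 / R), HasDerivAt (fun x : ℝ => -x⁻¹) (1 / x ^ 2) x := by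
    intro x hx
    rw [Set.uIcc_of_le hle] at hx
    have : 0 < x := hA'.trans_le hx.1
    exact (hasDerivAt_inv this.ne').fun_neg.congr_deriv (by simp)
  have hint : IntervalIntegrable (fun x : ℝ => 1 / x ^ 2) volume (1 / A) (1 / R) := by
    apply ContinuousOn.intervalIntegrable
    rw [Set.uIcc_of_le hle]
    refine ContinuousOn.div (by fun_prop) (by fun_prop) fun z hz => ?_
    have : 0 < z := hA'.trans_le hz.1
    positivity
  have h1 : ‖∫ x in (1 / A)..(1 / R), E1 x * (Real.exp x / x)‖ ≤
      ∫ x in (1 / A)..(1 / R), 1 / x ^ 2 := by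
    refine intervalIntegral.norm_integral_le_of_norm_le hle (ae_of_all _ fun x hx => ?_) hint
    have hx0 : 0 < x := hA'.trans hx.1
    have h0 := E1_nonneg x hx0
    rw [Real.norm_of_nonneg (by positivity)]
    calc E1 x * (Real.exp x / x) ≤ (Real.exp (-x) / x) * (Real.exp x / x) := by
          gcongr
          exact E1_le x hx0
      _ = 1 / x ^ 2 := by
          rw [Real.exp_neg]
          have := Real.exp_ne_zero x
          field_simp
  rw [intervalIntegral.integral_eq_sub_of_hasDerivAt hd hint, Real.norm_eq_abs] at h1
  simp only [one_div, inv_inv] at h1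
  simp only [one_div]
  have h2 : |c * (R - A)| ≤ |c| * A := by
    rw [abs_mul]
    gcongr
    rw [abs_le]
    constructor <;> linarith
  refine (abs_add_le _ _).trans ?_
  linarith

/-- The explicit function
`f_0(R) = (1 - e^{1/r*} E1(1/r*))(R - A) + ∫_{1/A}^{1/R} E1(x) e^x/x dx`
is twice continuously differentiable on `(0, A)`, solves
`f_0'(R) + R² f_0''(R) = e^{1/R} E1(1/R) - e^{1/r*} E1(1/r*)` there, satisfies
`f_0(A) = 0`, and is bounded on `(0, A]`. -/
theorem statement8 (rstar A : ℝ) (hrstar : 0 < rstar) (hrA : rstar < A)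
    (f0 : ℝ → ℝ)
    (hf0 : ∀ R : ℝ, f0 R =
      (1 - Real.exp (1 / rstar) * E1 (1 / rstar)) * (R - A) +
        ∫ x in (1 / A)..(1 / R), E1 x * (Real.exp x / x)) :
    (∀ R ∈ Set.Ioo (0:ℝ) A, DifferentiableAt ℝ f0 R) ∧
    ContinuousOn (deriv f0) (Set.Ioo (0:ℝ) A) ∧
    (∀ R ∈ Set.Ioo (0:ℝ) A, DifferentiableAt ℝ (deriv f0) R) ∧
    ContinuousOn (deriv (deriv f0)) (Set.Ioo (0:ℝ) A) ∧
    (∀ R ∈ Set.Ioo (0:ℝ) A,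
      deriv f0 R + R ^ 2 * deriv (deriv f0) R =
        Real.exp (1 / R) * E1 (1 / R) - Real.exp (1 / rstar) * E1 (1 / rstar)) ∧
    f0 A = 0 ∧
    (∃ C : ℝ, ∀ R ∈ Set.Ioc (0:ℝ) A, |f0 R| ≤ C) := by
  have hA : 0 < A := hrstar.trans hrA
  set c := 1 - Real.exp (1 / rstar) * E1 (1 / rstar) with hc
  have hf : f0 = fun R => c * (R - A) + ∫ x in (1 / A)..(1 / R), E1 x * (Real.exp x / x) :=
    funext hf0
  have d1 : ∀ R : ℝ, 0 < R → HasDerivAt f0 (c - Real.exp (1 / R) * E1 (1 / R) / R) R := by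
    intro R hR
    rw [hf]
    exact f_deriv c A hA R hR
  have d2 : ∀ R : ℝ, 0 < R → HasDerivAt (deriv f0)
      (Real.exp (1 / R) * E1 (1 / R) / R ^ 2 + Real.exp (1 / R) * E1 (1 / R) / R ^ 3
        - 1 / R ^ 2) R := by
    intro R hR
    have h1 := ((H_deriv R hR).div (hasDerivAt_id R) hR.ne').const_sub c
    refine (h1.congr_of_eventuallyEq ?_).congr_deriv ?_
    · filter_upwards [isOpen_Ioi.mem_nhds hR] with y hy
      simpa using (d1 y hy).deriv
    · simp only [id]
      field_simp
      ring
  refine ⟨fun R hR => (d1 R hR.1).differentiableAt,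
    fun R hR => (d2 R hR.1).continuousAt.continuousWithinAt,
    fun R hR => (d2 R hR.1).differentiableAt, ?_, ?_, ?_, ?_⟩
  · have hcont : ContinuousOn (fun R : ℝ => Real.exp (1 / R) * E1 (1 / R) / R ^ 2 +
        Real.exp (1 / R) * E1 (1 / R) / R ^ 3 - 1 / R ^ 2) (Set.Ioo 0 A) := by
      have hH : ContinuousOn (fun R : ℝ => Real.exp (1 / R) * E1 (1 / R)) (Set.Ioo 0 A) :=
        fun R hR => (H_deriv R hR.1).continuousAt.continuousWithinAt
      have hp : ∀ n : ℕ, ∀ R ∈ Set.Ioo 0 A, R ^ n ≠ 0 := fun n R hR => pow_ne_zero n hR.1.ne'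
      exact ((hH.div (by fun_prop) (hp 2)).add (hH.div (by fun_prop) (hp 3))).sub
        (continuousOn_const.div (by fun_prop) (hp 2))
    exact hcont.congr fun R hR => (d2 R hR.1).deriv
  · intro R hR
    have hR0 : R ≠ 0 := hR.1.ne'
    rw [(d1 R hR.1).deriv, (d2 R hR.1).deriv, hc]
    field_simp
    ring
  · rw [hf0]
    simp
  · refine ⟨|c| * A + A, fun R hR => ?_⟩
    rw [hf0]
    exact f_bound c A hA R hR.1 hR.2
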